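/- arXiv:2205.01584 — 2 statements merged into one kernel-verified Lean document; each statement's English description precedes it below -/
import Mathlib

section
/- Let β > 0, c > 0 and let τ : [0,∞) → Ω → [0,∞) be a process on a probability space (Ω, 𝓕, P) such that each τ_s is measurable, almost surely the path s ↦ τ_s(ω) is nondecreasing, and for all s ≥ 0 and λ ≥ 0 one has E[exp(−λ τ_s)] = exp(−c s λ^β). Define the first-passage time T(ω) = sSup { s ≥ 0 : τ_s(ω) < 1 } (with sSup ∅ = 0). Then for every p > 0 the p-th moment of T is finite: ∫⁻_Ω (T(ω))^p dP(ω) < ∞. -/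
open MeasureTheory ProbabilityTheory

/-- For a nondecreasing process `τ` with Laplace transform
`E[exp(−λ τ_s)] = exp(−c s λ^β)` (`c > 0`, `β > 0`), the first-passage time
`T(ω) = sSup {s ≥ 0 : τ_s(ω) < 1}` has finite moments of all positive orders. -/
theorem first_passage_time_finite_moments
    {Ω : Type*} [MeasurableSpace Ω] (P : Measure Ω) [IsProbabilityMeasure P]
    (β c : ℝ) (hβ : 0 < β) (hc : 0 < c) (τ : ℝ → Ω → ℝ)
    (hmeas : ∀ s : ℝ, Measurable (τ s))
    (hmono : ∀ᵐ ω ∂P, MonotoneOn (fun s => τ s ω) (Set.Ici (0 : ℝ)))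
    (hLap : ∀ s l : ℝ, 0 ≤ s → 0 ≤ l →
      ∫ ω, Real.exp (-(l * τ s ω)) ∂P = Real.exp (-(c * s * l ^ β))) :
    ∀ p : ℝ, 0 < p →
      ∫⁻ ω, ENNReal.ofReal ((sSup {s : ℝ | 0 ≤ s ∧ τ s ω < 1}) ^ p) ∂P < ⊤ := by
  intro p hp
  obtain ⟨k, hk⟩ := exists_nat_ge p
  set f : ℕ → Ω → ℝ := fun n ω =>
    (((n : ℝ) + 1) ^ k * Real.exp 1) * Real.exp (-(1 * τ n ω)) with hf
  have hint : ∀ n : ℕ, Integrable (fun ω => Real.exp (-(1 * τ n ω))) P := by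
    intro n
    by_contra h
    have h1 := hLap n 1 (Nat.cast_nonneg n) zero_le_one
    rw [integral_undef h] at h1
    exact (Real.exp_pos _).ne h1
  have hle : ∀ᵐ ω ∂P, ENNReal.ofReal ((sSup {s : ℝ | 0 ≤ s ∧ τ s ω < 1}) ^ p)
      ≤ ∑' n : ℕ, ENNReal.ofReal (f n ω) := by
    filter_upwards [hmono] with ω hω
    set S := {s : ℝ | 0 ≤ s ∧ τ s ω < 1} with hS
    have hT0 : 0 ≤ sSup S := Real.sSup_nonneg (fun x hx => hx.1)
    rcases hT0.eq_or_lt with h0 | hpos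
    · rw [← h0, Real.zero_rpow hp.ne']
      simp
    · have hne : S.Nonempty := by
        by_contra h
        rw [Set.not_nonempty_iff_eq_empty] at h
        rw [h, Real.sSup_empty] at hpos
        exact lt_irrefl _ hpos
      obtain ⟨n, hn⟩ : ∃ n : ℕ, ⌈sSup S⌉₊ = n + 1 :=
        Nat.exists_eq_succ_of_ne_zero (Nat.ceil_pos.2 hpos).ne'
      have h1 : sSup S ≤ (n : ℝ) + 1 := by
        have := Nat.le_ceil (sSup S)
        rw [hn] at this
        exact_mod_cast this
      have h2 : (n : ℝ) < sSup S := Nat.lt_ceil.1 (by omega)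
      obtain ⟨s, hs, hns⟩ := exists_lt_of_lt_csSup hne h2
      have h3 : τ n ω < 1 :=
        lt_of_le_of_lt (hω (Set.mem_Ici.2 (Nat.cast_nonneg n)) (Set.mem_Ici.2 hs.1) hns.le) hs.2
      refine le_trans (ENNReal.ofReal_le_ofReal ?_) (ENNReal.le_tsum n)
      have h4 : (sSup S) ^ p ≤ ((n : ℝ) + 1) ^ k := by
        calc (sSup S) ^ p ≤ ((n : ℝ) + 1) ^ p := Real.rpow_le_rpow hT0 h1 hp.le
          _ ≤ ((n : ℝ) + 1) ^ (k : ℝ) :=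
            Real.rpow_le_rpow_of_exponent_le (by linarith [Nat.cast_nonneg (α := ℝ) n]) hk
          _ = _ := Real.rpow_natCast _ _
      have h5 : 1 ≤ Real.exp 1 * Real.exp (-(1 * τ n ω)) := by
        rw [← Real.exp_add]
        exact Real.one_le_exp (by linarith)
      have h6 : 0 ≤ ((n : ℝ) + 1) ^ k := by positivity
      simp only [hf]
      rw [mul_assoc]
      nlinarith
  refine lt_of_le_of_lt (lintegral_mono_ae hle) ?_
  rw [lintegral_tsum (fun n => by
    have := hmeas n
    simp only [hf]
    fun_prop)]
  have hsum : Summable (fun n : ℕ => ((n : ℝ) + 1) ^ k * Real.exp 1 * Real.exp (-(c * n))) := by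
    have h := (summable_nat_add_iff 1).2 (Real.summable_pow_mul_exp_neg_nat_mul k hc)
    refine (h.mul_left (Real.exp 1 * Real.exp c)).congr (fun n => ?_)
    have : Real.exp (-(c * n)) = Real.exp c * Real.exp (-c * ((n + 1 : ℕ) : ℝ)) := by
      rw [← Real.exp_add]
      congr 1
      push_cast
      ring
    rw [this]
    push_cast
    ring
  have heq : ∀ n : ℕ, ∫⁻ ω, ENNReal.ofReal (f n ω) ∂P
      = ENNReal.ofReal (((n : ℝ) + 1) ^ k * Real.exp 1 * Real.exp (-(c * n))) := by
    intro n
    rw [← ofReal_integral_eq_lintegral_ofReal ((hint n).const_mul _)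
      (Filter.Eventually.of_forall fun ω => by simp only [Pi.zero_apply]; positivity)]
    rw [integral_const_mul, hLap n 1 (Nat.cast_nonneg n) zero_le_one, Real.one_rpow, mul_one]
  simp_rw [heq]
  exact hsum.tsum_ofReal_lt_top
end

section
/- Let μ and ν be Borel measures on ℂ that are both invariant under every rotation about the origin, i.e. for every θ ∈ ℝ the pushforward of μ (respectively ν) under the map z ↦ exp(θ·i)·z equals μ (respectively ν). Suppose that for every r > 0 one has μ(closedBall(0,r)) = ν(closedBall(0,r)) < ∞. Then μ = ν. -/
open MeasureTheory

lemma rot_aux_norm (μ ν : Measure ℂ)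
    (hball : ∀ r : ℝ, 0 < r →
      μ (Metric.closedBall 0 r) = ν (Metric.closedBall 0 r) ∧
      μ (Metric.closedBall 0 r) < ⊤) :
    Measure.map (fun z : ℂ => ‖z‖) μ = Measure.map (fun z : ℂ => ‖z‖) ν := by
  have hm : Measurable (fun z : ℂ => ‖z‖) := measurable_norm
  have hpre : ∀ a : ℝ, (fun z : ℂ => ‖z‖) ⁻¹' Set.Iic a = Metric.closedBall 0 a := by
    intro a; ext z; simp
  have hzero : μ (Metric.closedBall 0 0) = ν (Metric.closedBall 0 0) := by
    have key : ∀ ρ : Measure ℂ, ρ (Metric.closedBall 0 1) < ⊤ →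
        Filter.Tendsto (fun r : ℝ => ρ (Metric.closedBall 0 r)) (nhdsWithin 0 (Set.Ioi 0))
          (nhds (ρ (Metric.closedBall 0 0))) := by
      intro ρ hρ
      have h := tendsto_measure_cthickening_of_isClosed (μ := ρ) (s := {(0:ℂ)})
        ⟨1, one_pos, by rw [Metric.cthickening_singleton _ zero_le_one]; exact hρ.ne⟩ isClosed_singleton
      rw [Metric.closedBall_zero]
      refine (h.mono_left nhdsWithin_le_nhds).congr' ?_
      filter_upwards [self_mem_nhdsWithin] with r hr
      rw [Metric.cthickening_singleton _ (le_of_lt hr)]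
    have h1 := key μ (hball 1 one_pos).2
    have h2 := key ν ((hball 1 one_pos).1 ▸ (hball 1 one_pos).2)
    refine tendsto_nhds_unique (h1.congr' ?_) h2
    filter_upwards [self_mem_nhdsWithin] with r hr
    exact (hball r hr).1
  refine Measure.ext_of_generateFrom_of_iUnion (Set.range Set.Iic) (fun n : ℕ => Set.Iic ((n:ℝ)+1))
    ?_ isPiSystem_Iic ?_ (fun n => ⟨_, rfl⟩) ?_ ?_
  · rw [← borel_eq_generateFrom_Iic]; exact BorelSpace.measurable_eq
  · refine Set.eq_univ_of_forall fun x => Set.mem_iUnion.2 ?_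
    obtain ⟨n, hn⟩ := exists_nat_ge x
    exact ⟨n, by simp only [Set.mem_Iic]; linarith⟩
  · intro n
    rw [Measure.map_apply hm measurableSet_Iic, hpre]
    exact (hball _ (by positivity)).2.ne
  · rintro _ ⟨a, rfl⟩
    rw [Measure.map_apply hm measurableSet_Iic, Measure.map_apply hm measurableSet_Iic, hpre]
    rcases lt_trichotomy a 0 with h | h | h
    · rw [Metric.closedBall_eq_empty.2 h]; simp
    · rw [h]; exact hzero
    · exact (hball a h).1

lemma rot_aux_avg [MeasurableSpace Circle] [BorelSpace Circle] (μ : Measure ℂ) [SFinite μ] (P : Measure Circle) [IsProbabilityMeasure P]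
    [P.IsMulRightInvariant]
    (hμrot : ∀ θ : ℝ, Measure.map (fun z => Complex.exp (θ * Complex.I) * z) μ = μ)
    (f : ℂ → ENNReal) (hf : Measurable f) :
    ∫⁻ z, f z ∂μ = ∫⁻ t, (∫⁻ c : Circle, f (c * (t : ℂ)) ∂P) ∂(Measure.map (fun z : ℂ => ‖z‖) μ) := by
  have hjoint : Measurable (fun p : Circle × ℂ => f (p.1 * p.2)) :=
    hf.comp (by fun_prop : Continuous fun p : Circle × ℂ => (p.1 : ℂ) * p.2).measurable
  have h1 : ∀ c : Circle, ∫⁻ z, f (c * z) ∂μ = ∫⁻ z, f z ∂μ := by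
    intro c
    have hc : (c : ℂ) = Complex.exp ((Complex.arg c : ℝ) * Complex.I) := by
      rw [← Circle.coe_exp, Circle.exp_arg]
    conv_rhs => rw [← hμrot (Complex.arg c)]
    rw [lintegral_map hf (by fun_prop), ← hc]
  have h2 : ∀ z : ℂ, ∫⁻ c : Circle, f (c * z) ∂P = ∫⁻ c : Circle, f (c * ((‖z‖ : ℝ) : ℂ)) ∂P := by
    intro z
    rw [← lintegral_mul_right_eq_self (fun c : Circle => f (c * ((‖z‖ : ℝ) : ℂ)))
      (Circle.exp (Complex.arg z))]
    refine lintegral_congr fun c => ?_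
    congr 1
    conv_lhs => rw [← Complex.norm_mul_exp_arg_mul_I z]
    simp only [Circle.coe_mul, Circle.coe_exp]
    ring
  rw [lintegral_map _ measurable_norm]
  · simp_rw [← h2]
    rw [lintegral_lintegral_swap]
    · simp [h1]
    · exact (hjoint.comp measurable_swap).aemeasurable
  · have : Measurable (fun p : ℝ × Circle => f (p.2 * (p.1 : ℂ))) :=
      hf.comp (by fun_prop : Continuous fun p : ℝ × Circle => (p.2 : ℂ) * (p.1 : ℂ)).measurable
    exact this.lintegral_prod_right'

lemma rot_aux_sf (μ : Measure ℂ) (h : ∀ r : ℝ, 0 < r → μ (Metric.closedBall 0 r) < ⊤) :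
    SigmaFinite μ := by
  refine ⟨⟨⟨fun n : ℕ => Metric.closedBall 0 ((n:ℝ)+1), fun _ => trivial,
    fun n => h _ (by positivity), ?_⟩⟩⟩
  refine Set.eq_univ_of_forall fun x => Set.mem_iUnion.2 ?_
  obtain ⟨n, hn⟩ := exists_nat_ge ‖x‖
  exact ⟨n, by simp only [mem_closedBall_zero_iff]; linarith⟩

/-- Two rotation-invariant Borel measures on `ℂ` that assign the same finite
mass to every closed disk centered at the origin are equal. -/
theorem rotation_invariant_measures_eq_of_closedBall_eq
    (μ ν : Measure ℂ)
    (hμrot : ∀ θ : ℝ, Measure.map (fun z => Complex.exp (θ * Complex.I) * z) μ = μ)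
    (hνrot : ∀ θ : ℝ, Measure.map (fun z => Complex.exp (θ * Complex.I) * z) ν = ν)
    (hball : ∀ r : ℝ, 0 < r →
      μ (Metric.closedBall 0 r) = ν (Metric.closedBall 0 r) ∧
      μ (Metric.closedBall 0 r) < ⊤) :
    μ = ν := by
  have : SigmaFinite μ := rot_aux_sf μ fun r hr => (hball r hr).2
  have : SigmaFinite ν := rot_aux_sf ν fun r hr => (hball r hr).1 ▸ (hball r hr).2
  letI : MeasurableSpace Circle := borel Circle
  haveI : BorelSpace Circle := ⟨rfl⟩
  let P : Measure Circle := Measure.haarMeasure ⊤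
  have : IsProbabilityMeasure P := ⟨Measure.haarMeasure_self⟩
  ext A hA
  have hf : Measurable (A.indicator (1 : ℂ → ENNReal)) := measurable_one.indicator hA
  rw [← lintegral_indicator_one hA, ← lintegral_indicator_one hA,
    rot_aux_avg μ P hμrot _ hf, rot_aux_avg ν P hνrot _ hf, rot_aux_norm μ ν hball]
end
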